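/- arXiv:1910.08255 — 6 statements merged into one kernel-verified Lean document; each statement's English description precedes it below -/
import Mathlib

section
/- Let g : 𝒜 → 𝒜 and suppose there exists C₁ ∈ ℕ₀ such that the following three properties hold: (a) g(A + B·P) ≡ g(A) (mod P) for every A, B ∈ 𝒜 and every irreducible P ∈ 𝒫; (b) deg(g(A)) ≤ q^{deg(A)} − 1 for every A ∈ 𝒜 with deg(A) > C₁; (c) g(A) = 0 for every A ∈ 𝒜 with deg(A) ≤ C₁. Then g is identically 0. -/
/-!
Induct on `n = deg A`, with `n > C₁`. An irreducible `P` with `deg P ∣ n` satisfies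
`deg (A mod P) < deg P ≤ n`, so `g (A mod P) = 0` and hence `P ∣ g A`. These `P` are the
irreducible factors of the squarefree polynomial `X ^ q ^ n - X`, so the latter divides `g A`;
as its degree `q ^ n` exceeds that of `g A`, this forces `g A = 0`.
-/

open Polynomial

theorem dvd_of_squarefree_of_forall_irreducible_dvd {R : Type*} [CommMonoidWithZero R]
    [UniqueFactorizationMonoid R] {a b : R} (ha : Squarefree a)
    (h : ∀ p, Irreducible p → p ∣ a → p ∣ b) : a ∣ b := by
  nontriviality R
  refine (UniqueFactorizationMonoid.dvd_iff_emultiplicity_le ha.ne_zero).mpr fun p hp ↦ ?_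
  by_cases hpa : p ∣ a
  · have hle_one : emultiplicity p a ≤ 1 :=
      ((squarefree_iff_emultiplicity_le_one a).mp ha p).resolve_right hp.not_isUnit
    exact hle_one.trans
      (Order.one_le_iff_pos.mpr (emultiplicity_pos_of_dvd (h p hp.irreducible hpa)))
  · simp [emultiplicity_eq_zero.mpr hpa]

theorem X_pow_card_pow_sub_X_separable (R : Type*) [CommRing R] [Finite R] {n : ℕ} (hn : n ≠ 0) :
    (X ^ Nat.card R ^ n - X : R[X]).Separable := by
  have := Fintype.ofFinite R
  have hchar : ringChar R ∣ Nat.card R :=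
    ringChar.dvd (by rw [Nat.card_eq_fintype_card, Nat.cast_card_eq_zero])
  exact galois_poly_separable (ringChar R) _ (hchar.trans (dvd_pow_self _ hn))

section

variable {F : Type*} [Field F]

theorem dvd_apply_of_eq_zero_of_natDegree_lt {g : F[X] → F[X]} {P : F[X]} (hP : P.natDegree ≠ 0)
    (hcongr : ∀ A B : F[X], P ∣ g (A + B * P) - g A)
    (hzero : ∀ A : F[X], A.natDegree < P.natDegree → g A = 0) (A : F[X]) : P ∣ g A := by
  have hmod : g (A % P) = 0 := hzero _ (natDegree_mod_lt A hP)
  simpa only [hmod, sub_zero, mul_comm (A / P), EuclideanDomain.mod_add_div]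
    using hcongr (A % P) (A / P)

variable [Finite F] {n : ℕ}

theorem X_pow_card_pow_sub_X_dvd_of_forall_irreducible_dvd (hn : n ≠ 0) {f : F[X]}
    (h : ∀ P : F[X], Irreducible P → P.natDegree ∣ n → P ∣ f) :
    X ^ Nat.card F ^ n - X ∣ f :=
  dvd_of_squarefree_of_forall_irreducible_dvd (X_pow_card_pow_sub_X_separable F hn).squarefree
    fun P hP hdvd ↦ h P hP (hP.natDegree_dvd_of_dvd_X_pow_card_pow_sub_X hdvd)

theorem eq_zero_of_forall_irreducible_dvd_of_natDegree_lt (hn : n ≠ 0) {f : F[X]}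
    (h : ∀ P : F[X], Irreducible P → P.natDegree ∣ n → P ∣ f)
    (hf : f.natDegree < Nat.card F ^ n) : f = 0 := by
  refine eq_zero_of_dvd_of_natDegree_lt
    (X_pow_card_pow_sub_X_dvd_of_forall_irreducible_dvd hn h) ?_
  rwa [FiniteField.X_pow_card_pow_sub_X_natDegree_eq F hn Finite.one_lt_card]

end

/-- If `g : 𝒜 → 𝒜` satisfies (a) `g(A + B·P) ≡ g(A) mod P` for all `A, B` and irreducible `P`,
(b) `deg(g(A)) ≤ q^{deg A} - 1` whenever `deg A > C₁`, and (c) `g(A) = 0` whenever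
`deg A ≤ C₁`, then `g` is identically zero. -/
theorem ruzsa_polynomial_vanishing_lemma {F : Type*} [Field F] [Fintype F]
    (q : ℕ) (hq : q = Fintype.card F)
    (g : F[X] → F[X]) (C₁ : ℕ)
    (ha : ∀ A B P : F[X], Irreducible P → P ∣ g (A + B * P) - g A)
    (hb : ∀ A : F[X], C₁ < A.natDegree → (g A).natDegree ≤ q ^ A.natDegree - 1)
    (hc : ∀ A : F[X], A.natDegree ≤ C₁ → g A = 0) :
    ∀ A : F[X], g A = 0 := by
  replace hq : q = Nat.card F := hq.trans Nat.card_eq_fintype_card.symm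
  intro A
  induction hn : A.natDegree using Nat.strong_induction_on generalizing A with
  | _ n ih =>
    subst hn
    obtain hA | hA := le_or_gt A.natDegree C₁
    · exact hc A hA
    have hn : A.natDegree ≠ 0 := Nat.ne_zero_of_lt hA
    have hlt : (g A).natDegree < Nat.card F ^ A.natDegree :=
      hq ▸ (hb A hA).trans_lt (Nat.sub_one_lt (pow_ne_zero _ (hq ▸ Nat.card_pos.ne')))
    refine eq_zero_of_forall_irreducible_dvd_of_natDegree_lt hn (fun P hP hdvd ↦ ?_) hlt
    have hle : P.natDegree ≤ A.natDegree := Nat.le_of_dvd (Nat.pos_of_ne_zero hn) hdvd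
    exact dvd_apply_of_eq_zero_of_natDegree_lt hP.natDegree_pos.ne' (fun B C ↦ ha B C P hP)
      (fun B hB ↦ ih _ (hB.trans_le hle) B rfl) A
end

section
/- Let f : 𝒜 → 𝒜 satisfy f(A + B·P) ≡ f(A) (mod P) for every A, B ∈ 𝒜 and every irreducible P ∈ 𝒫, and suppose that deg(f(A)) < q^{deg(A)} / (27·q·deg(A)) whenever deg(A) is sufficiently large. Then there exist constants C₃, C₄ > 0 (depending only on q and f) such that deg(f(A)) ≤ C₃·deg(A) + C₄ for every A ∈ 𝒜 \ {0}. -/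
open Polynomial

/-!
Siegel's lemma over `F[t]` yields a nonzero `Q ∈ F[t][x, y]` with `Q(A, f(A)) = 0` for every `A` of
degree less than `n`. Suppose this holds below degree `m`, where `m ≥ n`, and let `deg A = m`. Every
irreducible `P` of degree at most `m` divides `Q(A, f(A))`, since `A` and `f(A)` may be reduced to
`A mod P` and `f(A mod P)`. The monic irreducibles of degree dividing `m` have product
`t ^ q ^ m - t`, so `Q(A, f(A))`, of degree less than `q ^ m`, vanishes. Hence `f(A)` is always a
root of `Q(A, ·)`, and the degree of a root is bounded by the degrees of the coefficients.
-/

open scoped Polynomial.Bivariate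

section RootBounds

variable {R : Type*}

theorem natDegree_eval_le [CommSemiring R] {p : R[X][X]} {H r : ℕ}
    (hH : ∀ i, (p.coeff i).natDegree ≤ H) (hr : p.natDegree ≤ r) (A : R[X]) :
    (p.eval A).natDegree ≤ H + r * A.natDegree := by
  rw [eval_eq_sum_range' (Nat.lt_succ_of_le hr)]
  refine natDegree_sum_le_of_forall_le _ _ fun i hi => ?_
  have hir : i ≤ r := Nat.le_of_lt_succ (Finset.mem_range.1 hi)
  exact natDegree_mul_le.trans <|
    add_le_add (hH i) (natDegree_pow_le.trans (Nat.mul_le_mul_right _ hir))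

theorem natDegree_le_of_isRoot [CommRing R] [IsDomain R] {p : R[X][X]} {y : R[X]} {B : ℕ}
    (hp : p ≠ 0) (hy : p.IsRoot y) (hB : ∀ i, (p.coeff i).natDegree ≤ B) : y.natDegree ≤ B := by
  by_contra! hlt
  have hy0 : y ≠ 0 := by rintro rfl; simp at hlt
  obtain ⟨k, hk⟩ : ∃ k, p.natDegree = k + 1 :=
    Nat.exists_eq_succ_of_ne_zero (natDegree_pos_of_eval₂_root hp _ hy fun _ => id).ne'
  have hlead : p.leadingCoeff * y ^ (k + 1) = -p.eraseLead.eval y := by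
    have h := congrArg (eval y) p.eraseLead_add_C_mul_X_pow
    rw [hy.eq_zero, eval_add, eval_mul, eval_C, eval_pow, eval_X, hk] at h
    linear_combination h
  have hupper : (p.eraseLead.eval y).natDegree ≤ B + k * y.natDegree := by
    refine natDegree_eval_le (fun i => ?_) (by simpa [hk] using p.eraseLead_natDegree_le) y
    rw [eraseLead_coeff]
    split_ifs
    · simp
    · exact hB i
  have hdeg := congrArg natDegree hlead
  rw [natDegree_neg, natDegree_mul (leadingCoeff_ne_zero.2 hp) (pow_ne_zero _ hy0),
    natDegree_pow] at hdeg
  linarith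

end RootBounds

section Bivariate

/-- `MultidegreeLE Q r D H` says that `Q(t, x, y)` has degree at most `r` in `y`, at most `D` in `x`
and at most `H` in `t`, where `Q` is encoded as a polynomial in `y` whose coefficients are
polynomials in `x` over `R[t]`. -/
structure MultidegreeLE {R : Type*} [Semiring R] (Q : R[X][X][Y]) (r D H : ℕ) : Prop where
  natDegree_le : Q.natDegree ≤ r
  natDegree_coeff_le (i : ℕ) : (Q.coeff i).natDegree ≤ D
  natDegree_coeff_coeff_le (i j : ℕ) : ((Q.coeff i).coeff j).natDegree ≤ H

variable {R : Type*}

/-- The polynomial `∑ w (i, j) x ^ j y ^ i` with `i ≤ r` and `j ≤ D`, to be used with coefficients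
`w` provided by linear algebra. -/
noncomputable def bivariateOfFn [Semiring R] [DecidableEq R] {r D : ℕ}
    (w : Fin (r + 1) × Fin (D + 1) → R) : R[X][Y] :=
  ofFn (r + 1) fun i => ofFn (D + 1) fun j => w (i, j)

theorem bivariateOfFn_ne_zero [Semiring R] [DecidableEq R] {r D : ℕ}
    {w : Fin (r + 1) × Fin (D + 1) → R} (hw : w ≠ 0) : bivariateOfFn w ≠ 0 := by
  refine fun h => hw (funext fun p => ?_)
  have hrow := (map_eq_zero_iff _ (injective_ofFn _)).1 (congrFun
    ((map_eq_zero_iff _ (injective_ofFn _)).1 h) p.1)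
  exact congrFun hrow p.2

theorem evalEval_bivariateOfFn [CommSemiring R] [DecidableEq R] {r D : ℕ}
    (w : Fin (r + 1) × Fin (D + 1) → R) (x y : R) :
    (bivariateOfFn w).evalEval x y = ∑ p, w p * x ^ (p.2 : ℕ) * y ^ (p.1 : ℕ) := by
  simp [bivariateOfFn, ofFn_eq_sum_monomial, evalEval, eval_finsetSum, Fintype.sum_prod_type]

theorem multidegreeLE_bivariateOfFn [Semiring R] [DecidableEq R] {r D H : ℕ}
    {w : Fin (r + 1) × Fin (D + 1) → R[X]} (hw : ∀ p, (w p).natDegree ≤ H) :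
    MultidegreeLE (bivariateOfFn w) r D H where
  natDegree_le := Nat.le_of_lt_succ (ofFn_natDegree_lt r.succ_pos _)
  natDegree_coeff_le i := by
    rw [bivariateOfFn]
    rcases lt_or_ge i (r + 1) with hi | hi
    · rw [ofFn_coeff_eq_val_of_lt _ hi]
      exact Nat.le_of_lt_succ (ofFn_natDegree_lt D.succ_pos _)
    · simp [hi]
  natDegree_coeff_coeff_le i j := by
    rw [bivariateOfFn]
    rcases lt_or_ge i (r + 1) with hi | hi <;> rcases lt_or_ge j (D + 1) with hj | hj <;>
      simp [hi, hj, hw]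

theorem exists_multidegreeLE [Semiring R] (Q : R[X][X][Y]) : ∃ r D H, MultidegreeLE Q r D H := by
  have bound {S : Type _} [Semiring S] (p : S[X]) (g : S → ℕ) (hg : g 0 = 0) (i : ℕ) :
      g (p.coeff i) ≤ p.support.sup fun i => g (p.coeff i) := by
    by_cases hi : i ∈ p.support
    · exact Finset.le_sup (f := fun i => g (p.coeff i)) hi
    · simp [notMem_support_iff.1 hi, hg]
  exact ⟨_, _, _, le_rfl, bound Q natDegree natDegree_zero, fun i j =>
    (bound (Q.coeff i) natDegree natDegree_zero j).trans
      (bound Q (fun c => c.support.sup fun j => (c.coeff j).natDegree) (by simp) i)⟩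

theorem MultidegreeLE.natDegree_coeff_map_le [CommSemiring R] {Q : R[X][X][Y]} {r D H : ℕ}
    (hQ : MultidegreeLE Q r D H) (A : R[X]) (i : ℕ) :
    ((Q.map (evalRingHom A)).coeff i).natDegree ≤ H + D * A.natDegree := by
  rw [coeff_map, coe_evalRingHom]
  exact natDegree_eval_le (hQ.natDegree_coeff_coeff_le i) (hQ.natDegree_coeff_le i) A

theorem MultidegreeLE.natDegree_evalEval_le [CommSemiring R] {Q : R[X][X][Y]} {r D H : ℕ}
    (hQ : MultidegreeLE Q r D H) (A B : R[X]) :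
    (Q.evalEval A B).natDegree ≤ H + D * A.natDegree + r * B.natDegree := by
  rw [← map_evalRingHom_eval]
  exact natDegree_eval_le (hQ.natDegree_coeff_map_le A)
    (natDegree_map_le.trans hQ.natDegree_le) B

theorem dvd_evalEval_sub_evalEval [CommRing R] {d a a' b b' : R} (ha : d ∣ a - a')
    (hb : d ∣ b - b') (Q : R[X][Y]) : d ∣ Q.evalEval a b - Q.evalEval a' b' := by
  have hx : d ∣ Q.evalEval a b - Q.evalEval a' b := ha.trans (sub_dvd_eval_sub a a' _)
  have hy : d ∣ Q.evalEval a' b - Q.evalEval a' b' := by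
    simp only [← map_evalRingHom_eval]
    exact hb.trans (sub_dvd_eval_sub b b' _)
  simpa only [sub_add_sub_cancel] using dvd_add hx hy

theorem exists_natDegree_le_of_evalEval_eq_zero [CommRing R] [IsDomain R] {Q : R[X][X][Y]}
    (hQ : Q ≠ 0) {f : R[X] → R[X]} (hf : ∀ A, Q.evalEval A (f A) = 0) :
    ∃ C₁ C₂ : ℕ, ∀ A, (f A).natDegree ≤ C₁ * A.natDegree + C₂ := by
  classical
  obtain ⟨r, D, H, hdeg⟩ := exists_multidegreeLE Q
  let s := Q.leadingCoeff.roots.toFinset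
  refine ⟨D, H + s.sup fun A => (f A).natDegree, fun A => ?_⟩
  by_cases hA : A ∈ s
  · have := Finset.le_sup (f := fun A => (f A).natDegree) hA
    lia
  · have hlead : Q.leadingCoeff.eval A ≠ 0 := by simpa [s, hQ] using hA
    have hmap : Q.map (evalRingHom A) ≠ 0 := fun h => hlead <| by
      simpa using congrArg (coeff · Q.natDegree) h
    have hroot : (Q.map (evalRingHom A)).IsRoot (f A) := by
      rw [IsRoot, map_evalRingHom_eval, hf]
    have := natDegree_le_of_isRoot hmap hroot (hdeg.natDegree_coeff_map_le A)
    lia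

end Bivariate

section Siegel

open Matrix

theorem mem_degreeLT_iff_natDegree_lt {R : Type*} [Semiring R] {A : R[X]} {n : ℕ} (hn : n ≠ 0) :
    A ∈ degreeLT R n ↔ A.natDegree < n := by
  rcases eq_or_ne A 0 with rfl | hA
  · simpa using hn.pos
  · rw [mem_degreeLT, natDegree_lt_iff_degree_lt hA]

variable {F : Type*} [Field F]

theorem exists_ne_zero_natDegree_le_mulVec_eq_zero {κ ι : Type*} [Fintype κ] [Fintype ι]
    (M : Matrix κ ι F[X]) {d H : ℕ} (hM : ∀ k i, (M k i).natDegree ≤ d)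
    (hcard : Fintype.card κ * (d + H + 1) < Fintype.card ι * (H + 1)) :
    ∃ w : ι → F[X], w ≠ 0 ∧ (∀ i, (w i).natDegree ≤ H) ∧ M *ᵥ w = 0 := by
  let T : (ι → degreeLT F (H + 1)) →ₗ[F] κ → Fin (d + H + 1) → F :=
    (LinearMap.pi fun l : Fin (d + H + 1) => lcoeff F l).compLeft κ ∘ₗ
      M.mulVecLin.restrictScalars F ∘ₗ (degreeLT F (H + 1)).subtype.compLeft ι
  have hker : LinearMap.ker T ≠ ⊥ := by
    apply LinearMap.ker_ne_bot_of_finrank_lt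
    simpa [Module.finrank_pi_fintype, Module.finrank_eq_card_basis (degreeLT.basis F (H + 1))]
      using hcard
  obtain ⟨w, hw, hw0⟩ := Submodule.exists_mem_ne_zero_of_ne_bot hker
  have hwH (i : ι) : (w i : F[X]).natDegree ≤ H :=
    Nat.le_of_lt_succ <| (mem_degreeLT_iff_natDegree_lt H.succ_ne_zero).1 (w i).2
  refine ⟨fun i => w i, fun h => hw0 <| funext fun i => Subtype.ext (congrFun h i), hwH, ?_⟩
  ext k l
  by_cases hl : l < d + H + 1
  · exact congrFun (congrFun (LinearMap.mem_ker.1 hw) k) ⟨l, hl⟩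
  · have hdeg : ((M *ᵥ fun i => (w i : F[X])) k).natDegree ≤ d + H :=
      natDegree_sum_le_of_forall_le _ _ fun i _ =>
        natDegree_mul_le.trans (add_le_add (hM k i) (hwH i))
    exact coeff_eq_zero_of_natDegree_lt (by lia)

theorem exists_multidegreeLE_evalEval_eq_zero {κ : Type*} [Fintype κ] (x y : κ → F[X])
    {r D H a b : ℕ} (hx : ∀ k, (x k).natDegree ≤ a) (hy : ∀ k, (y k).natDegree ≤ b)
    (hcard : Fintype.card κ * (D * a + r * b + H + 1) < (r + 1) * (D + 1) * (H + 1)) :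
    ∃ Q : F[X][X][Y], Q ≠ 0 ∧ MultidegreeLE Q r D H ∧ ∀ k, Q.evalEval (x k) (y k) = 0 := by
  classical
  let M : Matrix κ (Fin (r + 1) × Fin (D + 1)) F[X] :=
    .of fun k p => x k ^ (p.2 : ℕ) * y k ^ (p.1 : ℕ)
  have hM (k : κ) (p : Fin (r + 1) × Fin (D + 1)) : (M k p).natDegree ≤ D * a + r * b :=
    natDegree_mul_le.trans <| add_le_add
      (natDegree_pow_le.trans (Nat.mul_le_mul (Nat.le_of_lt_succ p.2.2) (hx k)))
      (natDegree_pow_le.trans (Nat.mul_le_mul (Nat.le_of_lt_succ p.1.2) (hy k)))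
  obtain ⟨w, hw0, hwH, hw⟩ := exists_ne_zero_natDegree_le_mulVec_eq_zero M (H := H) hM <| by
    simpa only [Fintype.card_prod, Fintype.card_fin] using hcard
  refine ⟨_, bivariateOfFn_ne_zero hw0, multidegreeLE_bivariateOfFn hwH, fun k => ?_⟩
  calc (bivariateOfFn w).evalEval (x k) (y k) = ∑ p, M k p * w p := by
        rw [evalEval_bivariateOfFn]
        exact Finset.sum_congr rfl fun p _ => by simp only [M, Matrix.of_apply]; ring
    _ = 0 := congrFun hw k

theorem exists_multidegreeLE_forall_natDegree_lt_evalEval_eq_zero [Finite F] (f : F[X] → F[X])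
    {r D H G n : ℕ} (hn : n ≠ 0) (hG : ∀ A : F[X], A.natDegree < n → (f A).natDegree ≤ G)
    (hcount : Nat.card F ^ n * (D * n + r * G + H + 1) < (r + 1) * (D + 1) * (H + 1)) :
    ∃ Q : F[X][X][Y], Q ≠ 0 ∧ MultidegreeLE Q r D H ∧
      ∀ A : F[X], A.natDegree < n → Q.evalEval A (f A) = 0 := by
  have : Finite (degreeLT F n) := Module.finite_of_finite F
  have := Fintype.ofFinite (degreeLT F n)
  have hcard : Fintype.card (degreeLT F n) = Nat.card F ^ n := by
    rw [Fintype.card_eq_nat_card, Nat.card_congr (degreeLTEquiv F n).toEquiv, Nat.card_fun,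
      Nat.card_fin]
  have hlt (A : degreeLT F n) : (A : F[X]).natDegree < n :=
    (mem_degreeLT_iff_natDegree_lt hn).1 A.2
  obtain ⟨Q, hQ, hdeg, hvan⟩ := exists_multidegreeLE_evalEval_eq_zero
    (fun A : degreeLT F n => (A : F[X])) (fun A => f A) (fun A => (hlt A).le)
    (fun A => hG A (hlt A)) (by rwa [hcard])
  exact ⟨Q, hQ, hdeg, fun A hA => hvan ⟨A, (mem_degreeLT_iff_natDegree_lt hn).2 hA⟩⟩

end Siegel

section Vanishing

variable {F : Type*} [Field F] [Finite F]

open UniqueFactorizationMonoid in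
theorem eq_zero_of_forall_irreducible_dvd {E : F[X]} {m : ℕ} (hm : m ≠ 0)
    (hdvd : ∀ P : F[X], Irreducible P → P.natDegree ∣ m → P ∣ E)
    (hE : E.natDegree < Nat.card F ^ m) : E = 0 := by
  classical
  by_contra hE0
  have hsq : Squarefree (X ^ Nat.card F ^ m - X : F[X]) := by
    obtain ⟨p, _⟩ := CharP.exists F
    have hp : p ∣ Nat.card F := (CharP.cast_eq_zero_iff F p _).1 <| by
      have := Fintype.ofFinite F
      simp
    exact (galois_poly_separable p _ (dvd_pow hp hm)).squarefree
  have hXE : X ^ Nat.card F ^ m - X ∣ E := by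
    refine (hsq.isRadical.dvd_radical hsq.ne_zero).trans <|
      (radical_dvd_iff_primeFactors_subset hE0).2 fun P hP => ?_
    rw [mem_primeFactors, mem_normalizedFactors_iff' hsq.ne_zero] at hP
    rw [mem_primeFactors, mem_normalizedFactors_iff' hE0]
    exact ⟨hP.1, hP.2.1, hdvd P hP.1 (hP.1.natDegree_dvd_of_dvd_X_pow_card_pow_sub_X hP.2.2)⟩
  refine hE0 (eq_zero_of_dvd_of_natDegree_lt hXE ?_)
  rwa [FiniteField.X_pow_card_pow_sub_X_natDegree_eq _ hm Finite.one_lt_card]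

theorem evalEval_eq_zero_of_forall_natDegree_lt {f : F[X] → F[X]}
    (hcong : ∀ A B P : F[X], Irreducible P → P ∣ f (A + B * P) - f A)
    {Q : F[X][X][Y]} {n : ℕ} (hn : n ≠ 0)
    (hsmall : ∀ A : F[X], A.natDegree < n → Q.evalEval A (f A) = 0)
    (hdeg : ∀ A : F[X], n ≤ A.natDegree →
      (Q.evalEval A (f A)).natDegree < Nat.card F ^ A.natDegree)
    (A : F[X]) : Q.evalEval A (f A) = 0 := by
  induction hm : A.natDegree using Nat.strong_induction_on generalizing A with
  | _ m ih =>
    subst hm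
    rcases lt_or_ge A.natDegree n with hA | hA
    · exact hsmall A hA
    refine eq_zero_of_forall_irreducible_dvd (by lia) (fun P hP hPA => ?_) (hdeg A hA)
    have hmod : A % P + A / P * P = A := by rw [mul_comm, EuclideanDomain.mod_add_div]
    have hlt : (A % P).natDegree < A.natDegree :=
      (natDegree_mod_lt A hP.natDegree_pos.ne').trans_le (Nat.le_of_dvd (by lia) hPA)
    have hfP : P ∣ f A - f (A % P) := by simpa only [hmod] using hcong (A % P) (A / P) P hP
    have hAP : P ∣ A - A % P := ⟨A / P, by rw [EuclideanDomain.mod_eq_sub_mul_div, sub_sub_cancel]⟩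
    simpa only [ih _ hlt _ rfl, sub_zero] using dvd_evalEval_sub_evalEval hAP hfP Q

end Vanishing

section Growth

theorem mul_pow_le_mul_pow {q n m : ℕ} (hq : 1 < q) (hn : n ≠ 0) (hnm : n ≤ m) :
    m * q ^ n ≤ n * q ^ m := by
  obtain ⟨k, rfl⟩ := Nat.exists_eq_add_of_le hnm
  have hk : k + 1 ≤ q ^ k := Nat.lt_pow_self hq
  calc (n + k) * q ^ n ≤ n * (k + 1) * q ^ n := by gcongr; nlinarith [Nat.one_le_iff_ne_zero.2 hn]
    _ ≤ n * q ^ k * q ^ n := by gcongr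
    _ = n * q ^ (n + k) := by ring

variable {R : Type*} [Semiring R] [Finite R]

theorem exists_forall_natDegree_lt_le (g : R[X] → ℕ) (N : ℕ) :
    ∃ K, ∀ A : R[X], A.natDegree < N → g A ≤ K := by
  have : Finite (degreeLT R N) := Module.finite_of_finite R
  obtain ⟨K, hK⟩ := (Set.finite_range fun A : degreeLT R N => g A).bddAbove
  exact ⟨K, fun A hA => hK ⟨⟨A, (mem_degreeLT_iff_natDegree_lt (by lia)).2 hA⟩, rfl⟩⟩

theorem exists_forall_natDegree_lt_mul_le [Nontrivial R] {c : ℕ} (g : R[X] → ℕ)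
    (hg : ∃ N : ℕ, ∀ A : R[X], N ≤ A.natDegree → c * A.natDegree * g A < Nat.card R ^ A.natDegree) :
    ∃ n, n ≠ 0 ∧ (∀ A : R[X], A.natDegree < n → c * n * g A ≤ Nat.card R ^ n) ∧
      ∀ A : R[X], n ≤ A.natDegree → c * A.natDegree * g A < Nat.card R ^ A.natDegree := by
  have hq : 1 < Nat.card R := Finite.one_lt_card
  obtain ⟨N, hN⟩ := hg
  obtain ⟨K, hK⟩ := exists_forall_natDegree_lt_le g (N + 1)
  obtain ⟨k, hk⟩ : ∃ k, k = 2 * c * K + N + 1 := ⟨_, rfl⟩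
  refine ⟨2 * k, by lia, fun A hA => ?_, fun A hA => hN A (by lia)⟩
  rcases lt_or_ge A.natDegree (N + 1) with hAN | hAN
  · have hkq : k ≤ Nat.card R ^ k := (Nat.lt_pow_self hq).le
    calc c * (2 * k) * g A ≤ c * (2 * k) * K := by gcongr; exact hK A hAN
      _ = k * (2 * c * K) := by ring
      _ ≤ k * k := by gcongr; lia
      _ ≤ Nat.card R ^ k * Nat.card R ^ k := by gcongr
      _ = Nat.card R ^ (2 * k) := by ring
  · have hA0 : 0 < A.natDegree := by lia
    refine Nat.le_of_mul_le_mul_left ?_ hA0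
    calc A.natDegree * (c * (2 * k) * g A) = 2 * k * (c * A.natDegree * g A) := by ring
      _ ≤ 2 * k * Nat.card R ^ A.natDegree := by gcongr; exact (hN A (by lia)).le
      _ ≤ A.natDegree * Nat.card R ^ (2 * k) := mul_pow_le_mul_pow hq hA0.ne' hA.le

theorem mul_lt_pow_of_lt_div {c q d a : ℕ}
    (h : (a : ℝ) < (q : ℝ) ^ d / (c * (q : ℝ) * (d : ℝ))) : c * d * a < q ^ d := by
  have hden : 0 < (c : ℝ) * q * d := by
    by_contra hden
    have : (c : ℝ) * q * d = 0 := le_antisymm (not_lt.1 hden) (by positivity)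
    rw [this, div_zero] at h
    exact h.not_ge a.cast_nonneg
  have hmul : a * (c * q * d) < q ^ d := by exact_mod_cast (lt_div_iff₀ hden).1 h
  have hq : 1 ≤ q := Nat.one_le_iff_ne_zero.2 <| by rintro rfl; simp at hden
  calc c * d * a ≤ c * d * a * q := Nat.le_mul_of_pos_right _ hq
    _ = a * (c * q * d) := by ring
    _ < q ^ d := hmul

end Growth

section Main

theorem exists_evalEval_eq_zero {F : Type*} [Field F] [Finite F] (f : F[X] → F[X])
    (hcong : ∀ A B P : F[X], Irreducible P → P ∣ f (A + B * P) - f A)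
    (hdeg : ∃ N : ℕ, ∀ A : F[X], N ≤ A.natDegree →
      27 * A.natDegree * (f A).natDegree < Nat.card F ^ A.natDegree) :
    ∃ Q : F[X][X][Y], Q ≠ 0 ∧ ∀ A, Q.evalEval A (f A) = 0 := by
  have hq : 1 < Nat.card F := Finite.one_lt_card
  obtain ⟨n, hn, hbelow, habove⟩ := exists_forall_natDegree_lt_mul_le _ hdeg
  set q := Nat.card F
  -- `Q(A, f(A))` has degree at most `H + D m + 9 n deg f(A)`, where `m = deg A`. Choosing
  -- `D ≈ q ^ n / (3 n)` and `H ≈ q ^ n / 3` bounds each of the three terms by `q ^ m / 3`.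
  obtain ⟨D, hDle, hDlt⟩ : ∃ D, 3 * n * D ≤ q ^ n ∧ q ^ n < 3 * n * (D + 1) :=
    ⟨q ^ n / (3 * n), Nat.mul_div_le _ _, Nat.lt_mul_div_succ _ (by lia)⟩
  obtain ⟨G, hGle, hG⟩ : ∃ G, 27 * n * G ≤ q ^ n ∧
      ∀ A : F[X], A.natDegree < n → (f A).natDegree ≤ G :=
    ⟨q ^ n / (27 * n), Nat.mul_div_le _ _, fun A hA =>
      (Nat.le_div_iff_mul_le (by lia)).2 (by linarith [hbelow A hA])⟩
  obtain ⟨H, hHle, hHlt⟩ : ∃ H, 2 * H ≤ D * n + 9 * n * G ∧ D * n + 9 * n * G < 2 * (H + 1) :=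
    ⟨_, Nat.mul_div_le _ _, Nat.lt_mul_div_succ _ two_pos⟩
  have hcount : q ^ n * (D * n + 9 * n * G + H + 1) < (9 * n + 1) * (D + 1) * (H + 1) :=
    calc q ^ n * (D * n + 9 * n * G + H + 1) ≤ q ^ n * (3 * (H + 1)) := by gcongr; lia
      _ < 3 * n * (D + 1) * (3 * (H + 1)) := by gcongr
      _ ≤ (9 * n + 1) * (D + 1) * (H + 1) := by nlinarith
  obtain ⟨Q, hQ, hQdeg, hQn⟩ :=
    exists_multidegreeLE_forall_natDegree_lt_evalEval_eq_zero f hn hG hcount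
  refine ⟨Q, hQ, evalEval_eq_zero_of_forall_natDegree_lt hcong hn hQn fun A hA => ?_⟩
  have hH : 3 * H ≤ q ^ A.natDegree := by
    have : q ^ n ≤ q ^ A.natDegree := Nat.pow_le_pow_right hq.le hA
    linarith
  have hD : 3 * (D * A.natDegree) ≤ q ^ A.natDegree := by
    refine Nat.le_of_mul_le_mul_left ?_ (Nat.pos_of_ne_zero hn)
    calc n * (3 * (D * A.natDegree)) = A.natDegree * (3 * n * D) := by ring
      _ ≤ A.natDegree * q ^ n := by gcongr
      _ ≤ n * q ^ A.natDegree := mul_pow_le_mul_pow hq hn hA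
  have hf : 3 * (9 * n * (f A).natDegree) < q ^ A.natDegree :=
    calc 3 * (9 * n * (f A).natDegree) = 27 * n * (f A).natDegree := by ring
      _ ≤ 27 * A.natDegree * (f A).natDegree := by gcongr
      _ < q ^ A.natDegree := habove A hA
  linarith [hQdeg.natDegree_evalEval_le A (f A)]

theorem ruzsa_polynomial_linear_bound_general {F : Type*} [Field F] [Finite F] (f : F[X] → F[X])
    (hcong : ∀ A B P : F[X], Irreducible P → P ∣ f (A + B * P) - f A)
    (hdeg : ∃ N : ℕ, ∀ A : F[X], N ≤ A.natDegree →
      27 * A.natDegree * (f A).natDegree < Nat.card F ^ A.natDegree) :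
    ∃ C₁ C₂ : ℕ, ∀ A, (f A).natDegree ≤ C₁ * A.natDegree + C₂ := by
  obtain ⟨Q, hQ, hf⟩ := exists_evalEval_eq_zero f hcong hdeg
  exact exists_natDegree_le_of_evalEval_eq_zero hQ hf

end Main

/-- If `f : 𝒜 → 𝒜` satisfies the congruence condition and
`deg(f(A)) < q^{deg A} / (27 q deg A)` for all `A` of sufficiently large degree, then there
are constants `C₃, C₄ > 0` with `deg(f(A)) ≤ C₃ deg(A) + C₄` for every nonzero `A ∈ 𝒜`. -/
theorem ruzsa_polynomial_linear_bound {F : Type*} [Field F] [Fintype F]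
    (q : ℕ) (hq : q = Fintype.card F)
    (f : F[X] → F[X])
    (hcong : ∀ A B P : F[X], Irreducible P → P ∣ f (A + B * P) - f A)
    (hdeg : ∃ N : ℕ, ∀ A : F[X], N ≤ A.natDegree →
      ((f A).natDegree : ℝ) < (q : ℝ) ^ A.natDegree / (27 * (q : ℝ) * (A.natDegree : ℝ))) :
    ∃ C₃ C₄ : ℝ, 0 < C₃ ∧ 0 < C₄ ∧
      ∀ A : F[X], A ≠ 0 → ((f A).natDegree : ℝ) ≤ C₃ * (A.natDegree : ℝ) + C₄ := by
  rw [← Nat.card_eq_fintype_card] at hq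
  obtain ⟨C₁, C₂, hC⟩ := ruzsa_polynomial_linear_bound_general f hcong <|
    hdeg.imp fun N hN A hA => hq ▸ mul_lt_pow_of_lt_div (c := 27) (hN A hA)
  exact ⟨C₁ + 1, C₂ + 1, by positivity, by positivity, fun A _ => mod_cast
    (hC A).trans (by gcongr <;> lia)⟩
end

section
/- Let f : 𝒜 → 𝒜 be a map and suppose there is a nonzero polynomial Q(X, Y) ∈ 𝒜[X, Y] with Q(A, f(A)) = 0 for every A ∈ 𝒜. Then there exist constants C₃, C₄ > 0 such that deg(f(A)) ≤ C₃·deg(A) + C₄ for every A ∈ 𝒜 \ {0}. -/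
open Polynomial

/-!
Let `R` be a domain and write `Q(A, Y) = ∑ cᵢ(A) Yⁱ`. Each `cᵢ(A)` has degree at most linear in
`deg A`, and a nonzero root in `R[t]` of a nonzero polynomial over `R[t]` divides its lowest nonzero
coefficient. Hence `deg f(A)` is bounded linearly in `deg A` whenever `Q(A, Y) ≠ 0`, and `Q(A, Y)`
vanishes identically only if `A` is one of the finitely many roots of the leading coefficient of `Q`
in `Y`.
-/

open Polynomial.Bivariate in
theorem eval_equivMvPolynomial {R : Type*} [CommSemiring R] (p : R[X][X]) (x y : R) :
    MvPolynomial.eval ![x, y] (equivMvPolynomial R p) = p.evalEval x y := by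
  have h : (MvPolynomial.aeval ![x, y]).comp (equivMvPolynomial R).toAlgHom = aevalAeval x y := by
    ext <;> simp
  rw [← coe_aevalAeval_eq_evalEval, ← h]
  rfl

theorem dvd_trailingCoeff_of_isRoot {R : Type*} [CommRing R] {p : R[X]} {x : R}
    (hx : x ∈ nonZeroDivisors R) (hp : p.IsRoot x) : x ∣ p.trailingCoeff := by
  set m := p.natTrailingDegree
  have hterms : ∀ j ≠ m, x ^ (m + 1) ∣ p.coeff j * x ^ j := by
    intro j hj
    rcases hj.lt_or_gt with hlt | hgt
    · simp [coeff_eq_zero_of_lt_natTrailingDegree hlt]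
    · exact (pow_dvd_pow x hgt).mul_left _
  have hdvd : x * x ^ m ∣ p.trailingCoeff * x ^ m :=
    pow_succ' x m ▸ dvd_term_of_isRoot_of_dvd_terms m hp hterms
  exact (dvd_cancel_right_mem_nonZeroDivisors (pow_mem hx m)).mp hdvd

theorem natDegree_le_natDegree_trailingCoeff_of_isRoot {R : Type*} [CommRing R] [NoZeroDivisors R]
    {p : R[X][X]} {y : R[X]} (hp : p ≠ 0) (hy : p.IsRoot y) :
    y.natDegree ≤ p.trailingCoeff.natDegree := by
  rcases eq_or_ne y 0 with rfl | hy0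
  · simp
  · exact natDegree_le_of_dvd
      (dvd_trailingCoeff_of_isRoot (mem_nonZeroDivisors_of_ne_zero hy0) hy)
      (trailingCoeff_nonzero_iff_nonzero.mpr hp)

theorem exists_natDegree_eval_le {R : Type*} [Semiring R] (c : R[X][X]) :
    ∃ b, ∀ A : R[X], (c.eval A).natDegree ≤ c.natDegree * A.natDegree + b := by
  obtain ⟨b, hb⟩ := (c.finite_range_coeff.image natDegree).bddAbove
  refine ⟨b, fun A => ?_⟩
  rw [eval_eq_sum_range]
  refine natDegree_sum_le_of_forall_le _ _ fun i hi => ?_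
  calc (c.coeff i * A ^ i).natDegree
      ≤ (c.coeff i).natDegree + i * A.natDegree :=
        natDegree_mul_le.trans (Nat.add_le_add_left natDegree_pow_le _)
    _ ≤ b + c.natDegree * A.natDegree := by
        gcongr
        · exact hb ⟨_, ⟨i, rfl⟩, rfl⟩
        · exact Finset.mem_range_succ_iff.mp hi
    _ = c.natDegree * A.natDegree + b := add_comm _ _

theorem exists_natDegree_eval_le_of_finite {R : Type*} [Semiring R] {s : Set R[X][X]}
    (hs : s.Finite) :
    ∃ a b, ∀ c ∈ s, ∀ A : R[X], (c.eval A).natDegree ≤ a * A.natDegree + b := by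
  choose b hb using fun c : R[X][X] => exists_natDegree_eval_le c
  obtain ⟨M, hM⟩ := (hs.image natDegree).bddAbove
  obtain ⟨N, hN⟩ := (hs.image b).bddAbove
  refine ⟨M, N, fun c hc A => (hb c A).trans ?_⟩
  gcongr
  · exact hM ⟨c, hc, rfl⟩
  · exact hN ⟨c, hc, rfl⟩

theorem exists_natDegree_le_of_evalEval_eq_zero_s5 {R : Type*} [CommRing R] [NoZeroDivisors R]
    (P : R[X][X][X]) :
    ∃ a b, ∀ A B : R[X], P.leadingCoeff.eval A ≠ 0 → P.evalEval A B = 0 →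
      B.natDegree ≤ a * A.natDegree + b := by
  obtain ⟨a, b, hab⟩ := exists_natDegree_eval_le_of_finite P.finite_range_coeff
  refine ⟨a, b, fun A B hA hB => ?_⟩
  set p := P.map (evalRingHom A)
  have hp : p ≠ 0 := fun h => hA <| by
    simpa [p, coeff_map] using congrArg (coeff · P.natDegree) h
  have hroot : p.IsRoot B := (map_evalRingHom_eval A B P).trans hB
  calc B.natDegree
      ≤ p.trailingCoeff.natDegree := natDegree_le_natDegree_trailingCoeff_of_isRoot hp hroot
    _ = ((P.coeff p.natTrailingDegree).eval A).natDegree := by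
        rw [trailingCoeff, coeff_map, coe_evalRingHom]
    _ ≤ a * A.natDegree + b := hab _ ⟨_, rfl⟩ A

section IsDomain

variable {R : Type*} [CommRing R] [IsDomain R]

theorem exists_natDegree_apply_le_of_evalEval_eq_zero {P : R[X][X][X]} (hP : P ≠ 0)
    {f : R[X] → R[X]} (hf : ∀ A, P.evalEval A (f A) = 0) :
    ∃ a b, ∀ A, (f A).natDegree ≤ a * A.natDegree + b := by
  obtain ⟨a, b, hab⟩ := exists_natDegree_le_of_evalEval_eq_zero_s5 P
  have hfin : {A | P.leadingCoeff.IsRoot A}.Finite :=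
    finite_setOfPred_isRoot (leadingCoeff_ne_zero.mpr hP)
  obtain ⟨d, hd⟩ := (hfin.image fun A => (f A).natDegree).bddAbove
  refine ⟨a, b + d, fun A => ?_⟩
  by_cases hA : P.leadingCoeff.IsRoot A
  · have : (f A).natDegree ≤ d := hd ⟨A, hA, rfl⟩
    omega
  · have := hab A (f A) hA (hf A)
    omega

theorem linear_bound_of_algebraic_relation_general (f : R[X] → R[X])
    (Q : MvPolynomial (Fin 2) R[X]) (hQ : Q ≠ 0)
    (hrel : ∀ A : R[X], MvPolynomial.eval ![A, f A] Q = 0) :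
    ∃ C₃ C₄ : ℝ, 0 < C₃ ∧ 0 < C₄ ∧
      ∀ A : R[X], A ≠ 0 → ((f A).natDegree : ℝ) ≤ C₃ * (A.natDegree : ℝ) + C₄ := by
  obtain ⟨P, rfl⟩ := (Bivariate.equivMvPolynomial R[X]).surjective Q
  have hP : P ≠ 0 := by simpa using hQ
  simp only [eval_equivMvPolynomial] at hrel
  obtain ⟨a, b, hab⟩ := exists_natDegree_apply_le_of_evalEval_eq_zero hP hrel
  refine ⟨a + 1, b + 1, by positivity, by positivity, fun A _ => ?_⟩
  have hA : (f A).natDegree ≤ (a + 1) * A.natDegree + (b + 1) := (hab A).trans (by gcongr <;> omega)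
  exact_mod_cast hA

end IsDomain

/-- If `f : 𝒜 → 𝒜` is a map and there is a nonzero `Q ∈ 𝒜[X, Y]` with `Q(A, f(A)) = 0`
for every `A ∈ 𝒜`, then there are constants `C₃, C₄ > 0` with
`deg(f(A)) ≤ C₃ deg(A) + C₄` for every nonzero `A ∈ 𝒜`. -/
theorem linear_bound_of_algebraic_relation {F : Type*} [Field F] [Fintype F]
    (f : F[X] → F[X])
    (Q : MvPolynomial (Fin 2) F[X]) (hQ : Q ≠ 0)
    (hrel : ∀ A : F[X], MvPolynomial.eval ![A, f A] Q = 0) :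
    ∃ C₃ C₄ : ℝ, 0 < C₃ ∧ 0 < C₄ ∧
      ∀ A : F[X], A ≠ 0 → ((f A).natDegree : ℝ) ≤ C₃ * (A.natDegree : ℝ) + C₄ :=
  linear_bound_of_algebraic_relation_general f Q hQ hrel
end

section
/- Let U(t) ∈ 𝒜 with U′ ≠ 0 and write δ = deg(U). Let M, ε > 0. Then there exists a positive constant C₇ depending only on ε, M, p, and U such that for every n ≥ 1: d_{n−1, n, U} ≥ δ·M·n^{2−ε} − C₇. -/
open Polynomial

/-- `rad A`: the product of the distinct monic irreducible factors of `A`. -/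
noncomputable def polyRad {F : Type*} [Field F] (A : Polynomial F) : Polynomial F :=
  ∏ᶠ P ∈ {P : Polynomial F | P.Monic ∧ Irreducible P ∧ P ∣ A}, P

/-!
If `f` is separable, then the repeated part `divRadical (f ∘ U)` divides both `f ∘ U` and
`(f ∘ U)' = (f' ∘ U) U'`, hence divides `U'`, because `f ∘ U` and `f' ∘ U` are coprime. So passing
from `f ∘ U` to its radical lowers the degree by at most `deg U'`. Apply this to the product `f`
of the cyclotomic polynomials `Φₘ` with `1 ≤ m ≤ n` and `m ≠ 0` in the field: it is separable,
`f ∘ U` divides `∏ (Uᵐ - 1)`, and its degree is `deg U · ∑ φ(m)`. The totient sum is at least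
`n² / 64`, so the radical has degree at least `deg U · n² / 64 - deg U'`.
-/

open Filter Finset UniqueFactorizationMonoid EuclideanDomain

lemma exists_mul_rpow_le_mul_rpow_add {a b c : ℝ} (hab : a < b) (hc : 0 < c) (M : ℝ) :
    ∃ C, 0 < C ∧ ∀ n : ℕ, M * (n : ℝ) ^ a ≤ c * (n : ℝ) ^ b + C := by
  have tendsto_rpow : Tendsto (fun n : ℕ ↦ (n : ℝ) ^ (b - a)) atTop atTop :=
    (tendsto_rpow_atTop (sub_pos.mpr hab)).comp tendsto_natCast_atTop_atTop
  have eventually_nonpos : ∀ᶠ n : ℕ in atTop, M * (n : ℝ) ^ a - c * (n : ℝ) ^ b ≤ 0 := by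
    filter_upwards [tendsto_rpow.eventually_ge_atTop (M / c), eventually_gt_atTop 0] with n hn n_pos
    rw [sub_nonpos]
    calc M * (n : ℝ) ^ a ≤ c * (n : ℝ) ^ (b - a) * (n : ℝ) ^ a := by
          gcongr
          exact (div_le_iff₀' hc).mp hn
      _ = c * (n : ℝ) ^ b := by
          rw [mul_assoc, ← Real.rpow_add (Nat.cast_pos.mpr n_pos), sub_add_cancel]
  obtain ⟨B, hB⟩ := (isBoundedUnder_of_eventually_le eventually_nonpos).bddAbove_range
  refine ⟨max B 1, by positivity, fun n ↦ ?_⟩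
  linarith [hB (Set.mem_range_self n), le_max_left B 1]

lemma prod_range_sub_eq_prod_Icc {α : Type*} [CommMonoid α] (f : ℕ → α) (n : ℕ) :
    ∏ i ∈ range n, f (n - i) = ∏ m ∈ Icc 1 n, f m := by
  simpa [Ico_add_one_right_eq_Icc] using prod_Ico_reflect f 0 n.le_succ

lemma sq_le_four_mul_sum_not_dvd {q : ℕ} (hq : q ≠ 1) (n : ℕ) :
    n ^ 2 ≤ 4 * ∑ m ∈ Icc 1 n with ¬ q ∣ m, m := by
  induction n using Nat.twoStepInduction with
  | zero => simp
  | one => simp [filter_singleton, hq]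
  | more n ih _ =>
    have not_dvd_both : ¬ (q ∣ n + 1 ∧ q ∣ n + 2) := fun h ↦
      hq (Nat.dvd_one.mp ((Nat.dvd_add_right h.1).mp h.2))
    have last_two_terms_ge : n + 1 ≤
        (if ¬ q ∣ n + 1 then n + 1 else 0) + (if ¬ q ∣ n + 2 then n + 2 else 0) := by
      grind
    simp only [sum_filter] at ih ⊢
    rw [sum_Icc_succ_top (by lia), sum_Icc_succ_top (by lia)]
    calc (n + 2) ^ 2 = n ^ 2 + 4 * (n + 1) := by ring
      _ ≤ _ := by grw [ih, last_two_terms_ge]; exact le_of_eq (by ring)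

lemma sum_le_sum_totient_mul_div {n : ℕ} {s : Finset ℕ} (hs : s ⊆ Icc 1 n)
    (hdiv : ∀ m ∈ s, m.divisors ⊆ s) :
    ∑ m ∈ s, m ≤ ∑ d ∈ s, d.totient * (n / d) := by
  calc ∑ m ∈ s, m = ∑ m ∈ s, ∑ d ∈ m.divisors, d.totient :=
        sum_congr rfl fun m _ ↦ (Nat.sum_totient m).symm
    _ = ∑ d ∈ s, ∑ m ∈ s with d ∣ m, d.totient := by
        refine sum_comm' fun m d ↦ ?_
        have pos_of_mem : m ∈ s → 1 ≤ m := fun hm ↦ (mem_Icc.mp (hs hm)).1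
        grind
    _ = ∑ d ∈ s, d.totient * #{m ∈ s | d ∣ m} := by
        simp only [sum_const, smul_eq_mul, mul_comm]
    _ ≤ ∑ d ∈ s, d.totient * #{m ∈ Ioc 0 n | d ∣ m} := by
        gcongr
        exact hs
    _ = ∑ d ∈ s, d.totient * (n / d) := by
        simp only [Nat.Ioc_filter_dvd_card_eq_div]

lemma mul_sum_totient_mul_div_le {n : ℕ} {s : Finset ℕ} (hs : s ⊆ Icc 1 n) (k : ℕ) :
    k * ∑ d ∈ s, d.totient * (n / d) ≤ n ^ 2 + k ^ 2 * ∑ d ∈ s, d.totient := by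
  obtain rfl | hk := k.eq_zero_or_pos
  · simp
  have term_le (d : ℕ) :
      d.totient * (n / d) ≤ (if d ≤ n / k then n else 0) + k * d.totient := by
    split_ifs with hd
    · calc d.totient * (n / d) ≤ d * (n / d) := by gcongr; exact d.totient_le
        _ ≤ n := Nat.mul_div_le n d
        _ ≤ n + k * d.totient := Nat.le_add_right _ _
    · have div_le : n / d ≤ k := by
        rw [not_le, Nat.div_lt_iff_lt_mul hk] at hd
        exact Nat.div_le_of_le_mul hd.le
      rw [zero_add, mul_comm k]
      gcongr
  have card_le : #{d ∈ s | d ≤ n / k} ≤ n / k := by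
    calc #{d ∈ s | d ≤ n / k} ≤ #(Icc 1 (n / k)) := by
          refine card_le_card fun d hd ↦ ?_
          obtain ⟨hd, hdk⟩ := mem_filter.mp hd
          exact mem_Icc.mpr ⟨(mem_Icc.mp (hs hd)).1, hdk⟩
      _ = n / k := by simp
  calc k * ∑ d ∈ s, d.totient * (n / d)
      ≤ k * ∑ d ∈ s, ((if d ≤ n / k then n else 0) + k * d.totient) := by
        gcongr
        exact term_le _
    _ = k * #{d ∈ s | d ≤ n / k} * n + k ^ 2 * ∑ d ∈ s, d.totient := by
        rw [sum_add_distrib, ← sum_filter, sum_const, ← mul_sum, smul_eq_mul]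
        ring
    _ ≤ k * (n / k) * n + k ^ 2 * ∑ d ∈ s, d.totient := by gcongr
    _ ≤ n ^ 2 + k ^ 2 * ∑ d ∈ s, d.totient := by
        rw [sq n]
        gcongr
        exact Nat.mul_div_le n k

lemma sq_le_sixtyFour_mul_sum_totient_not_dvd {q : ℕ} (hq : q ≠ 1) (n : ℕ) :
    n ^ 2 ≤ 64 * ∑ m ∈ Icc 1 n with ¬ q ∣ m, m.totient := by
  set s := {m ∈ Icc 1 n | ¬ q ∣ m} with hs
  have divisors_subset : ∀ m ∈ s, m.divisors ⊆ s := by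
    intro m hm d hd
    have dvd_m := Nat.dvd_of_mem_divisors hd
    have d_le := Nat.divisor_le hd
    have d_pos := Nat.pos_of_mem_divisors hd
    rw [hs, mem_filter, mem_Icc] at hm ⊢
    exact ⟨⟨d_pos, d_le.trans hm.1.2⟩, fun h ↦ hm.2 (h.trans dvd_m)⟩
  have sum_id : n ^ 2 ≤ 4 * ∑ m ∈ s, m := sq_le_four_mul_sum_not_dvd hq n
  have sum_id_le := sum_le_sum_totient_mul_div (filter_subset _ _) divisors_subset
  -- Any factor `k > 4` would do in place of `8`; this one gives the smallest constant.
  have mul_sum_le : 8 * ∑ d ∈ s, d.totient * (n / d) ≤ n ^ 2 + 8 ^ 2 * ∑ d ∈ s, d.totient :=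
    mul_sum_totient_mul_div_le (filter_subset _ _) 8
  lia

lemma natDegree_prod_cyclotomic (R : Type*) [CommRing R] [Nontrivial R] (s : Finset ℕ) :
    (∏ m ∈ s, cyclotomic m R).natDegree = ∑ m ∈ s, m.totient := by
  rw [natDegree_prod_of_monic _ _ fun m _ ↦ cyclotomic.monic m R]
  simp only [natDegree_cyclotomic]

lemma prod_pow_sub_one_ne_zero {R : Type*} [CommRing R] [IsDomain R] {U : R[X]} {s : Finset ℕ}
    (hs : 0 ∉ s) (hU : U.natDegree ≠ 0) :
    ∏ m ∈ s, (U ^ m - 1) ≠ 0 := by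
  refine prod_ne_zero_iff.mpr fun m hm h ↦ ?_
  have degree_eq : m * U.natDegree = 0 := by
    rw [← natDegree_pow, sub_eq_zero.mp h, natDegree_one]
  exact mul_ne_zero (ne_of_mem_of_not_mem hm hs) hU degree_eq

lemma prod_cyclotomic_comp_dvd {R : Type*} [CommRing R] {s t : Finset ℕ} (hst : s ⊆ t) (U : R[X]) :
    (∏ m ∈ s, cyclotomic m R).comp U ∣ ∏ m ∈ t, (U ^ m - 1) := by
  have prod_dvd : ∏ m ∈ s, cyclotomic m R ∣ ∏ m ∈ t, (X ^ m - 1) :=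
    (prod_dvd_prod_of_dvd _ _ fun m _ ↦ cyclotomic.dvd_X_pow_sub_one m R).trans
      (prod_dvd_prod_of_subset _ _ _ hst)
  simpa [Polynomial.prod_comp] using map_dvd (compRingHom U) prod_dvd

section Radical

variable {F : Type*} [Field F] {U : F[X]}

lemma polyRad_eq_radical [DecidableEq F] {A : F[X]} (hA : A ≠ 0) : polyRad A = radical A := by
  have setOf_eq : {P : F[X] | P.Monic ∧ Irreducible P ∧ P ∣ A} = primeFactors A := by
    ext P
    rw [mem_coe, mem_primeFactors, mem_normalizedFactors_iff' hA, Set.mem_ofPred_eq]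
    constructor
    · rintro ⟨monic, irred, dvd⟩
      exact ⟨irred, monic.normalize_eq_self, dvd⟩
    · rintro ⟨irred, normalized, dvd⟩
      exact ⟨(normalize_eq_self_iff_monic irred.ne_zero).mp normalized, irred, dvd⟩
  rw [polyRad, setOf_eq, finprod_mem_coe_finset, radical]
  rfl

lemma separable_prod_cyclotomic {s : Finset ℕ} (hs : ∀ m ∈ s, (m : F) ≠ 0) :
    (∏ m ∈ s, cyclotomic m F).Separable := by
  have cast_prod_ne_zero : ((∏ m ∈ s, m : ℕ) : F) ≠ 0 := by
    rw [Nat.cast_prod]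
    exact prod_ne_zero_iff.mpr hs
  have prod_ne_zero : ∏ m ∈ s, m ≠ 0 := fun h ↦ cast_prod_ne_zero (by rw [h, Nat.cast_zero])
  refine (X_pow_sub_one_separable_iff.mpr cast_prod_ne_zero).of_dvd ?_
  rw [← prod_cyclotomic_eq_X_pow_sub_one (Nat.pos_of_ne_zero prod_ne_zero)]
  exact prod_dvd_prod_of_subset _ _ _ fun m hm ↦
    Nat.mem_divisors.mpr ⟨dvd_prod_of_mem _ hm, prod_ne_zero⟩

lemma divRadical_comp_dvd_derivative [DecidableEq F] {f : F[X]} (hf : f.Separable) (U : F[X]) :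
    divRadical (f.comp U) ∣ derivative U := by
  have coprime : IsCoprime (divRadical (f.comp U)) ((derivative f).comp U) :=
    (IsCoprime.map hf (compRingHom U)).of_isCoprime_of_dvd_left (divRadical_dvd_self _)
  refine coprime.dvd_of_dvd_mul_right ?_
  rw [← derivative_comp]
  exact divRadical_dvd_derivative _

lemma natDegree_comp_le_natDegree_radical_add [DecidableEq F] {f : F[X]} (hf : f.Separable)
    (hU : derivative U ≠ 0) :
    (f.comp U).natDegree ≤ (radical (f.comp U)).natDegree + (derivative U).natDegree := by
  calc (f.comp U).natDegree = (radical (f.comp U) * divRadical (f.comp U)).natDegree := by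
        rw [radical_mul_divRadical]
    _ ≤ (radical (f.comp U)).natDegree + (divRadical (f.comp U)).natDegree := natDegree_mul_le
    _ ≤ (radical (f.comp U)).natDegree + (derivative U).natDegree := by
        gcongr
        exact natDegree_le_of_dvd (divRadical_comp_dvd_derivative hf U) hU

lemma sum_totient_mul_natDegree_le_natDegree_polyRad_add {s : Finset ℕ} (hs : 0 ∉ s)
    (hU : derivative U ≠ 0) :
    (∑ m ∈ s with ¬ ringChar F ∣ m, m.totient) * U.natDegree ≤
      (polyRad (∏ m ∈ s, (U ^ m - 1))).natDegree + (derivative U).natDegree := by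
  classical
  set f := ∏ m ∈ s with ¬ ringChar F ∣ m, cyclotomic m F with hf
  have separable : f.Separable := separable_prod_cyclotomic fun m hm ↦
    mt (ringChar.spec F m).mp (mem_filter.mp hm).2
  have comp_dvd : f.comp U ∣ ∏ m ∈ s, (U ^ m - 1) := prod_cyclotomic_comp_dvd (filter_subset _ _) U
  have prod_ne_zero : ∏ m ∈ s, (U ^ m - 1) ≠ 0 :=
    prod_pow_sub_one_ne_zero hs (mt derivative_of_natDegree_zero hU)
  rw [polyRad_eq_radical prod_ne_zero]
  calc (∑ m ∈ s with ¬ ringChar F ∣ m, m.totient) * U.natDegree = (f.comp U).natDegree := by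
        rw [natDegree_comp, hf, natDegree_prod_cyclotomic]
    _ ≤ (radical (f.comp U)).natDegree + (derivative U).natDegree :=
        natDegree_comp_le_natDegree_radical_add separable hU
    _ ≤ (radical (∏ m ∈ s, (U ^ m - 1))).natDegree + (derivative U).natDegree := by
        gcongr
        exact natDegree_le_of_dvd (radical_dvd_radical comp_dvd prod_ne_zero) radical_ne_zero

lemma natDegree_mul_sq_le_natDegree_polyRad_add (hU : derivative U ≠ 0) (n : ℕ) :
    U.natDegree * n ^ 2 ≤ 64 * ((polyRad (∏ m ∈ Icc 1 n, (U ^ m - 1))).natDegree +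
      (derivative U).natDegree) := by
  calc U.natDegree * n ^ 2
      ≤ U.natDegree * (64 * ∑ m ∈ Icc 1 n with ¬ ringChar F ∣ m, m.totient) := by
        gcongr
        exact sq_le_sixtyFour_mul_sum_totient_not_dvd CharP.ringChar_ne_one n
    _ = 64 * ((∑ m ∈ Icc 1 n with ¬ ringChar F ∣ m, m.totient) * U.natDegree) := by ring
    _ ≤ _ := by
        gcongr
        exact sum_totient_mul_natDegree_le_natDegree_polyRad_add (by simp) hU

end Radical

theorem radical_degree_lower_bound_full_general {F : Type*} [Field F]
    (U : F[X]) (hU : Polynomial.derivative U ≠ 0) (M ε : ℝ) (hε : 0 < ε) :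
    ∃ C₇ : ℝ, 0 < C₇ ∧ ∀ n : ℕ, 1 ≤ n →
      (U.natDegree : ℝ) * M * (n : ℝ) ^ (2 - ε) - C₇ ≤
        ((polyRad (∏ i ∈ Finset.range n, (U ^ (n - i) - 1))).natDegree : ℝ) := by
  obtain ⟨C, hC, growth⟩ :=
    exists_mul_rpow_le_mul_rpow_add (a := 2 - ε) (b := 2) (c := 1 / 64) (by linarith)
      (by norm_num) M
  refine ⟨U.natDegree * C + (derivative U).natDegree + 1, by positivity, fun n _ ↦ ?_⟩
  rw [prod_range_sub_eq_prod_Icc (fun m ↦ U ^ m - 1)]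
  have quadratic : (U.natDegree : ℝ) * n ^ 2 ≤ 64 *
      ((polyRad (∏ m ∈ Icc 1 n, (U ^ m - 1))).natDegree + (derivative U).natDegree) := by
    exact_mod_cast natDegree_mul_sq_le_natDegree_polyRad_add hU n
  have scaled := mul_le_mul_of_nonneg_left (growth n) (Nat.cast_nonneg (α := ℝ) U.natDegree)
  rw [Real.rpow_two] at scaled
  linarith

/-- Let `U ∈ 𝒜 = 𝔽[t]` with `U' ≠ 0` and `δ = deg U`, and let `M, ε > 0`. Then there is a
constant `C₇ > 0` (depending only on `ε, M, p, U`) such that for every `n ≥ 1`,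
`d_{n-1, n, U} ≥ δ M n^{2-ε} - C₇`, where `d_{m,n,U}` is the degree of the radical of
`Δ_{m,n,U} = (Uⁿ - 1)(U^{n-1} - 1) ⋯ (U^{n-m} - 1)`. -/
theorem radical_degree_lower_bound_full {F : Type*} [Field F] [Fintype F]
    (U : F[X]) (hU : Polynomial.derivative U ≠ 0)
    (M ε : ℝ) (hM : 0 < M) (hε : 0 < ε) :
    ∃ C₇ : ℝ, 0 < C₇ ∧ ∀ n : ℕ, 1 ≤ n →
      (U.natDegree : ℝ) * M * (n : ℝ) ^ (2 - ε) - C₇ ≤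
        ((polyRad (∏ i ∈ Finset.range n, (U ^ (n - i) - 1))).natDegree : ℝ) :=
  radical_degree_lower_bound_full_general U hU M ε hε
end

section
/- Let Γ ⊂ 𝒦* be a finitely generated subgroup of rank r, and consider the equation x + y = 1 with (x, y) ∈ Γ × Γ. Then there exists a finite subset 𝒳 of 𝒦* × 𝒦* of cardinality at most p^{2r} − 1 such that every solution (x, y) ∈ (Γ × Γ) with x and y not both lying in the algebraic closure of the prime field (i.e. (x,y) ∉ F̄ × F̄) has the form x = x₀^{p^k} and y = y₀^{p^k} for some (x₀, y₀) ∈ 𝒳 and some k ∈ ℕ₀. -/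
/-!
Suppose `x + y = 1` and `x a ^ p + y b ^ p = 1` with `a ^ p ≠ b ^ p`. Solving this linear system
for `x` expresses it through `p`-th powers only, so `x` is itself a `p`-th power. Hence a solution
whose `x` is not a `p`-th power is determined by its class modulo `p`-th powers, and that class is
nontrivial. Extracting `p`-th roots as often as possible turns every nonconstant solution in `Γ`
into such a primitive solution, whose coordinates lie in the group `Δ` of all `p`-power roots of
elements of `Γ`. The group `Δ` has the same rank `r` as `Γ`, although it need not be finitely
generated, and it has no `p`-torsion, so `Δ / Δ ^ p` has at most `p ^ r` elements: a family
independent modulo `p` is independent over `ℤ`.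
-/

open Polynomial TensorProduct

section Rank

universe u

variable {R : Type*} [CommRing R] [IsDomain R]

theorem rank_eq_finrank_tensorProduct {M : Type*} [AddCommGroup M] [Module R M]
    [Module.Finite R M] (K : Type*) [Field K] [Algebra R K] [FaithfulSMul R K] :
    Module.rank R M = Module.finrank K (K ⊗[R] M) := by
  rw [(TensorProduct.isBaseChange R M K).finrank_eq, Module.finrank_eq_rank]

theorem rank_le_of_exists_smul_mem_range {M N : Type u} [AddCommGroup M] [Module R M]
    [AddCommGroup N] [Module R N] (f : M →ₗ[R] N)
    (hf : ∀ y, ∃ a : R, a ≠ 0 ∧ a • y ∈ LinearMap.range f) :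
    Module.rank R N ≤ Module.rank R M := by
  have htors : Module.IsTorsion R (N ⧸ LinearMap.range f) := by
    rintro ⟨y⟩
    obtain ⟨a, ha, hay⟩ := hf y
    exact ⟨⟨a, mem_nonZeroDivisors_of_ne_zero ha⟩, (Submodule.Quotient.mk_eq_zero _).2 hay⟩
  rw [← rank_quotient_add_rank_of_isDomain (LinearMap.range f), htors.rank_eq_zero, zero_add]
  exact rank_range_le f

theorem linearIndependent_of_sum_eq_smul_imp_dvd [WfDvdMonoid R] {M ι : Type*} [AddCommGroup M]
    [Module R M] {π : R} (hπ : ¬IsUnit π) (hM : IsSMulRegular M π) {v : ι → M}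
    (hv : ∀ (s : Finset ι) (c : ι → R) (m : M), ∑ i ∈ s, c i • v i = π • m → ∀ i ∈ s, π ∣ c i) :
    LinearIndependent R v := by
  have pow_dvd (n : ℕ) : ∀ (s : Finset ι) (c : ι → R), ∑ i ∈ s, c i • v i = 0 →
      ∀ i ∈ s, π ^ n ∣ c i := by
    induction n with
    | zero => simp
    | succ n ih =>
      intro s c hc i hi
      have hdvd : ∀ j ∈ s, π ∣ c j := hv s c 0 (by rw [hc, smul_zero])
      choose! d hd using hdvd
      have hd_sum : ∑ j ∈ s, d j • v j = 0 := by
        refine hM.right_eq_zero_of_smul ?_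
        rw [Finset.smul_sum, ← hc]
        exact Finset.sum_congr rfl fun j hj => by rw [hd j hj, mul_smul]
      rw [hd i hi, pow_succ']
      exact mul_dvd_mul_left π (ih s d hd_sum i hi)
  rw [linearIndependent_iff']
  intro s c hc i hi
  by_contra hci
  obtain ⟨n, hn⟩ := FiniteMultiplicity.of_not_isUnit hπ hci
  exact hn (pow_dvd (n + 1) s c hc i hi)

end Rank

section ModN

variable {A : Type*} [AddCommGroup A] {n : ℕ}

theorem modN_mkQ_eq_mkQ_iff {a b : A} :
    ModN.mkQ n a = ModN.mkQ n b ↔ ∃ c, a = b + n • c := by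
  refine (Submodule.Quotient.eq (LinearMap.range (LinearMap.lsmul ℤ A n))).trans ?_
  simp [eq_comm (b := a - b), sub_eq_iff_eq_add']

theorem modN_mkQ_ofMul_eq_mkQ_ofMul_iff {G : Type*} [CommGroup G] {a b : G} :
    ModN.mkQ n (Additive.ofMul a) = ModN.mkQ n (Additive.ofMul b) ↔ ∃ c, a = b * c ^ n :=
  modN_mkQ_eq_mkQ_iff

theorem linearIndependent_of_modN {ι : Type*} (hn : n ≠ 1) (hA : IsSMulRegular A n) {v : ι → A}
    (hv : LinearIndependent (ZMod n) fun i => ModN.mkQ n (v i)) : LinearIndependent ℤ v := by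
  have hA' : IsSMulRegular A (n : ℤ) := fun a b hab => hA (by simpa using hab)
  refine linearIndependent_of_sum_eq_smul_imp_dvd (by simpa [Int.isUnit_iff] using hn) hA' ?_
  intro s c a hsum i hi
  have hmod : ∑ j ∈ s, (c j : ZMod n) • ModN.mkQ n (v j) = 0 := by
    simp_rw [Int.cast_smul_eq_zsmul, ← map_zsmul, ← map_sum]
    rw [← map_zero (ModN.mkQ n), modN_mkQ_eq_mkQ_iff]
    exact ⟨a, by simpa using hsum⟩
  exact (ZMod.intCast_zmod_eq_zero_iff_dvd _ _).1 (linearIndependent_iff'.1 hv s _ hmod i hi)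

theorem rank_modN_le (hn : n ≠ 1) (hA : IsSMulRegular A n) :
    Module.rank (ZMod n) (ModN A n) ≤ Module.rank ℤ A := by
  rw [Module.rank_def]
  refine ciSup_le' fun ⟨s, hs⟩ => ?_
  have hout (x : ModN A n) : ModN.mkQ n (Quotient.out x) = x := Quotient.out_eq x
  have hs' : LinearIndependent (ZMod n) fun x : s => ModN.mkQ n (Quotient.out x.1) := by
    simp_rw [hout]
    exact hs
  exact (linearIndependent_of_modN hn hA hs').cardinal_le_rank

theorem finite_modN_and_natCard_le {p r : ℕ} [Fact p.Prime] (hA : IsSMulRegular A p)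
    (hr : Module.rank ℤ A ≤ r) : Finite (ModN A p) ∧ Nat.card (ModN A p) ≤ p ^ r := by
  have hp : p.Prime := Fact.out
  have hrank : Module.rank (ZMod p) (ModN A p) ≤ r := (rank_modN_le hp.ne_one hA).trans hr
  have : Module.Finite (ZMod p) (ModN A p) :=
    Module.rank_lt_aleph0_iff.1 (hrank.trans_lt Cardinal.natCast_lt_aleph0)
  refine ⟨Module.finite_of_finite (ZMod p), ?_⟩
  rw [Module.natCard_eq_pow_finrank (K := ZMod p), Nat.card_zmod]
  exact Nat.pow_le_pow_right hp.pos (Module.finrank_le_of_rank_le hrank)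

end ModN

section Isolator

variable {G : Type*} [CommGroup G]

/-- The isolator of a subgroup `Γ` with respect to `n`: the group of all elements having some
iterated `n`-th power in `Γ`. Roots of solutions in `Γ` live in it. -/
def isolator (n : ℕ) (Γ : Subgroup G) : Subgroup G where
  carrier := {g | ∃ k, g ^ n ^ k ∈ Γ}
  one_mem' := ⟨0, by simp⟩
  inv_mem' := by
    rintro g ⟨k, hg⟩
    exact ⟨k, by simpa using hg⟩
  mul_mem' := by
    rintro g h ⟨k, hg⟩ ⟨l, hh⟩
    refine ⟨k + l, ?_⟩
    rw [mul_pow, pow_add, pow_mul g, mul_comm (n ^ k), pow_mul h]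
    exact mul_mem (pow_mem hg _) (pow_mem hh _)

theorem rank_isolator_le {n : ℕ} (hn : n ≠ 0) (Γ : Subgroup G) :
    Module.rank ℤ (Additive (isolator n Γ)) ≤ Module.rank ℤ (Additive Γ) := by
  have hΓ : Γ ≤ isolator n Γ := fun g hg => ⟨0, by simpa using hg⟩
  refine rank_le_of_exists_smul_mem_range
    (Subgroup.inclusion hΓ).toAdditive.toIntLinearMap fun g => ?_
  obtain ⟨k, hk⟩ := g.toMul.2
  refine ⟨(n ^ k : ℕ), by simp [hn], Additive.ofMul ⟨_, hk⟩, ?_⟩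
  rw [natCast_zsmul]
  rfl

end Isolator

section PerfectCore

/-- The perfect core of a field of exponential characteristic `p`: its largest perfect subfield,
consisting of the elements that are `p ^ k`-th powers for every `k`. Over a general field it plays
the role of the field of constants. -/
def perfectCore (K : Type*) [Field K] (p : ℕ) [ExpChar K p] : Subfield K :=
  ⨅ k, (iterateFrobenius K p k).fieldRange

theorem mem_perfectCore_iff {K : Type*} [Field K] {p : ℕ} [ExpChar K p] {x : K} :
    x ∈ perfectCore K p ↔ ∀ k, ∃ z, z ^ p ^ k = x := by
  simp [perfectCore, Subfield.mem_iInf, iterateFrobenius_def]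

theorem exists_pow_eq_of_notMem_perfectCore {K : Type*} [Field K] {p : ℕ} [ExpChar K p] {x : K}
    (hx : x ∉ perfectCore K p) : ∃ k z, z ^ p ^ k = x ∧ ∀ w, w ^ p ≠ z := by
  classical
  rw [mem_perfectCore_iff, not_forall] at hx
  obtain ⟨k, hk⟩ : ∃ k, Nat.find hx = k + 1 :=
    Nat.exists_eq_succ_of_ne_zero fun h0 => Nat.find_spec hx ⟨x, by rw [h0, pow_zero, pow_one]⟩
  obtain ⟨z, hz⟩ := not_not.1 (Nat.find_min hx (m := k) (by lia))
  refine ⟨k, z, hz, fun w hw => Nat.find_spec hx ⟨w, ?_⟩⟩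
  rw [hk, pow_succ', pow_mul, hw, hz]

end PerfectCore

section RatFunc

variable {F : Type*} [Field F]

theorem ratFunc_num_pow_mul_denom_pow (z : RatFunc F) (m : ℕ) :
    (z ^ m).num * z.denom ^ m = z.num ^ m * (z ^ m).denom :=
  (RatFunc.num_mul_eq_mul_denom_iff (pow_ne_zero m z.denom_ne_zero)).2 <| by
    rw [map_pow, map_pow, ← div_pow, z.num_div_denom]

theorem ratFunc_denom_pow (z : RatFunc F) (m : ℕ) : (z ^ m).denom = z.denom ^ m := by
  have h := ratFunc_num_pow_mul_denom_pow z m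
  refine eq_of_monic_of_associated (z ^ m).monic_denom (z.monic_denom.pow m)
    (associated_of_dvd_dvd ?_ ?_)
  · exact (z ^ m).isCoprime_num_denom.symm.dvd_of_dvd_mul_left (Dvd.intro_left _ h.symm)
  · exact z.isCoprime_num_denom.symm.pow.dvd_of_dvd_mul_left (Dvd.intro_left _ h)

theorem ratFunc_num_pow (z : RatFunc F) (m : ℕ) : (z ^ m).num = z.num ^ m := by
  have h := ratFunc_num_pow_mul_denom_pow z m
  rw [ratFunc_denom_pow] at h
  exact mul_right_cancel₀ (pow_ne_zero m z.denom_ne_zero) h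

theorem perfectCore_ratFunc_le (p : ℕ) [Fact p.Prime] [CharP (RatFunc F) p] :
    perfectCore (RatFunc F) p ≤ (algebraMap F (RatFunc F)).fieldRange := by
  intro x hx
  rw [mem_perfectCore_iff] at hx
  have eq_zero_of_pow_dvd {d : ℕ} (hd : ∀ k, p ^ k ∣ d) : d = 0 :=
    Nat.eq_zero_of_dvd_of_lt (hd d) (Nat.lt_pow_self (Fact.out : p.Prime).one_lt)
  have hnum : x.num.natDegree = 0 := eq_zero_of_pow_dvd fun k => by
    obtain ⟨z, rfl⟩ := hx k
    rw [ratFunc_num_pow, natDegree_pow]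
    exact dvd_mul_right _ _
  have hdenom : x.denom.natDegree = 0 := eq_zero_of_pow_dvd fun k => by
    obtain ⟨z, rfl⟩ := hx k
    rw [ratFunc_denom_pow, natDegree_pow]
    exact dvd_mul_right _ _
  obtain ⟨c, rfl⟩ := x.eq_C_iff.2 ⟨hnum, hdenom⟩
  exact ⟨c, congrArg (· c) (RatFunc.algebraMap_eq_C (K := F))⟩

end RatFunc

section PrimitiveSolution

variable {K : Type*} [Field K] {p : ℕ}

theorem eq_one_of_add_eq_one_of_mul_pow_add_mul_pow_eq_one [ExpChar K p] {x y a b : K}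
    (hx : ∀ w, w ^ p ≠ x) (hxy : x + y = 1) (hab : x * a ^ p + y * b ^ p = 1) :
    a = 1 ∧ b = 1 := by
  have h_eq : a ^ p = b ^ p := by
    by_contra hne
    refine hx ((1 - b) / (a - b)) ?_
    rw [div_pow, sub_pow_expChar, sub_pow_expChar, one_pow, div_eq_iff (sub_ne_zero.2 hne)]
    linear_combination b ^ p * hxy - hab
  have ha : a ^ p = 1 := by linear_combination hab - a ^ p * hxy + y * h_eq
  have eq_one {c : K} (hc : c ^ p = 1) : c = 1 :=
    frobenius_inj K p (by simpa [frobenius_def] using hc)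
  exact ⟨eq_one ha, eq_one (h_eq ▸ ha)⟩

theorem isSMulRegular_additive_units [ExpChar K p] (Δ : Subgroup Kˣ) :
    IsSMulRegular (Additive Δ) p := by
  intro a b hab
  refine Additive.toMul.injective (Subtype.ext (Units.ext (frobenius_inj K p ?_)))
  exact congrArg (fun c : Additive Δ => ((c.toMul : Kˣ) : K)) hab

/-- The primitive solutions of the unit equation in `Δ`: those that are not the `p`-th power of
another solution, not even with coordinates outside `Δ`. In characteristic `p` it is enough to ask
this of the first coordinate. -/
def primitiveSolutions (p : ℕ) (Δ : Subgroup Kˣ) : Set (Kˣ × Kˣ) :=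
  {z | z.1 ∈ Δ ∧ z.2 ∈ Δ ∧ (z.1 : K) + z.2 = 1 ∧ ∀ w : K, w ^ p ≠ z.1}

/-- The class of a primitive solution in `(Δ / Δ ^ p) ^ 2`, written additively in order to use the
`ZMod p`-module structure of `ModN`. -/
def solutionClass {Δ : Subgroup Kˣ} (z : primitiveSolutions p Δ) :
    ModN (Additive Δ) p × ModN (Additive Δ) p :=
  (ModN.mkQ p (Additive.ofMul ⟨z.1.1, z.2.1⟩), ModN.mkQ p (Additive.ofMul ⟨z.1.2, z.2.2.1⟩))

theorem solutionClass_injective [ExpChar K p] {Δ : Subgroup Kˣ} :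
    Function.Injective (solutionClass (p := p) (Δ := Δ)) := by
  rintro ⟨⟨x, y⟩, hx, hy, hxy, hprim⟩ ⟨⟨x', y'⟩, hx', hy', hxy', hprim'⟩ h
  obtain ⟨a, ha⟩ := modN_mkQ_ofMul_eq_mkQ_ofMul_iff.1 (congrArg Prod.fst h)
  obtain ⟨b, hb⟩ := modN_mkQ_ofMul_eq_mkQ_ofMul_iff.1 (congrArg Prod.snd h)
  obtain rfl : x = x' * (a : Kˣ) ^ p := congrArg Subtype.val ha
  obtain rfl : y = y' * (b : Kˣ) ^ p := congrArg Subtype.val hb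
  obtain ⟨ha_one, hb_one⟩ :=
    eq_one_of_add_eq_one_of_mul_pow_add_mul_pow_eq_one hprim' hxy' (by simpa using hxy)
  simp [Units.val_eq_one.1 ha_one, Units.val_eq_one.1 hb_one]

theorem solutionClass_ne_zero {Δ : Subgroup Kˣ} (z : primitiveSolutions p Δ) :
    solutionClass z ≠ 0 := by
  obtain ⟨⟨x, y⟩, hx, hy, hxy, hprim⟩ := z
  intro h
  have hclass : ModN.mkQ p (Additive.ofMul (⟨x, hx⟩ : Δ)) = ModN.mkQ p (Additive.ofMul 1) :=
    (congrArg Prod.fst h).trans (map_zero _).symm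
  obtain ⟨a, ha⟩ := modN_mkQ_ofMul_eq_mkQ_ofMul_iff.1 hclass
  rw [one_mul] at ha
  exact hprim (a : Kˣ) (congrArg (fun c : Δ => ((c : Kˣ) : K)) ha.symm)

theorem finite_primitiveSolutions_and_ncard_le [Fact p.Prime] [CharP K p] {Δ : Subgroup Kˣ} {r : ℕ}
    (hr : Module.rank ℤ (Additive Δ) ≤ r) :
    (primitiveSolutions p Δ).Finite ∧ (primitiveSolutions p Δ).ncard ≤ p ^ (2 * r) - 1 := by
  obtain ⟨_, hcard⟩ := finite_modN_and_natCard_le (isSMulRegular_additive_units (p := p) Δ) hr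
  refine ⟨Finite.of_injective _ (solutionClass_injective (p := p) (Δ := Δ)), ?_⟩
  calc (primitiveSolutions p Δ).ncard
      = (Set.range (solutionClass (p := p) (Δ := Δ))).ncard :=
        (Nat.card_range_of_injective solutionClass_injective).symm
    _ ≤ ({0}ᶜ : Set (ModN (Additive Δ) p × ModN (Additive Δ) p)).ncard :=
        Set.ncard_le_ncard (Set.range_subset_iff.2 solutionClass_ne_zero)
    _ = Nat.card (ModN (Additive Δ) p) ^ 2 - 1 := by
        rw [Set.ncard_compl, Set.ncard_singleton, Nat.card_prod, sq]
    _ ≤ (p ^ r) ^ 2 - 1 := Nat.sub_le_sub_right (Nat.pow_le_pow_left hcard 2) 1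
    _ = p ^ (2 * r) - 1 := by rw [← pow_mul, mul_comm]

theorem exists_mem_primitiveSolutions_isolator_pow_eq [ExpChar K p] {Γ : Subgroup Kˣ} {x y : Kˣ}
    (hx : x ∈ Γ) (hy : y ∈ Γ) (hxy : (x : K) + y = 1) (hcore : (x : K) ∉ perfectCore K p) :
    ∃ z ∈ primitiveSolutions p (isolator p Γ), ∃ k, x = z.1 ^ p ^ k ∧ y = z.2 ^ p ^ k := by
  obtain ⟨k, u, hu, hprim⟩ := exists_pow_eq_of_notMem_perfectCore hcore
  have hv : (1 - u) ^ p ^ k = y := by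
    rw [sub_pow_expChar_pow, hu, one_pow]
    linear_combination -hxy
  have hpk : p ^ k ≠ 0 := (expChar_pow_pos K p k).ne'
  lift u to Kˣ using (isUnit_pow_iff hpk).1 (hu ▸ x.isUnit)
  obtain ⟨v, hv_eq⟩ : IsUnit (1 - u : K) := (isUnit_pow_iff hpk).1 (hv ▸ y.isUnit)
  have hxu : x = u ^ p ^ k := Units.ext (by simpa using hu.symm)
  have hyv : y = v ^ p ^ k := Units.ext (by simpa [hv_eq] using hv.symm)
  refine ⟨(u, v), ⟨⟨k, hxu ▸ hx⟩, ⟨k, hyv ▸ hy⟩, ?_, hprim⟩, k, hxu, hyv⟩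
  simp [hv_eq]

end PrimitiveSolution

theorem unit_equation_char_p_general {K : Type*} [Field K] (p : ℕ) [Fact p.Prime] [CharP K p]
    (Γ : Subgroup Kˣ) (r : ℕ) (hr : Module.rank ℤ (Additive Γ) ≤ r) :
    ∃ 𝒳 : Finset (Kˣ × Kˣ), 𝒳.card ≤ p ^ (2 * r) - 1 ∧
      ∀ x y : Kˣ, x ∈ Γ → y ∈ Γ → (x : K) + (y : K) = 1 →
        ¬((x : K) ∈ perfectCore K p ∧ (y : K) ∈ perfectCore K p) →
        ∃ z ∈ 𝒳, ∃ k : ℕ, x = z.1 ^ p ^ k ∧ y = z.2 ^ p ^ k := by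
  obtain ⟨hfin, hcard⟩ := finite_primitiveSolutions_and_ncard_le (p := p)
    ((rank_isolator_le (Fact.out : p.Prime).ne_zero Γ).trans hr)
  refine ⟨hfin.toFinset, by rwa [← Set.ncard_eq_toFinset_card _ hfin], ?_⟩
  intro x y hx hy hxy hcore
  have hx_core : (x : K) ∉ perfectCore K p := fun h =>
    hcore ⟨h, eq_sub_of_add_eq' hxy ▸ sub_mem (one_mem _) h⟩
  simpa only [Set.Finite.mem_toFinset] using
    exists_mem_primitiveSolutions_isolator_pow_eq hx hy hxy hx_core

/-- **S-unit equation in characteristic `p`.** Let `𝒦 = 𝔽(t)` with `𝔽` a finite field of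
characteristic `p`, and let `Γ ⊆ 𝒦*` be a finitely generated subgroup of (free) rank `r`.
Then there is a finite set `𝒳 ⊆ 𝒦* × 𝒦*` of cardinality at most `p^{2r} - 1` such that
every solution of `x + y = 1` with `x, y ∈ Γ` not both constant (constants being exactly the
elements of `𝒦` lying in the algebraic closure of the prime field) has the form
`x = x₀^{p^k}`, `y = y₀^{p^k}` for some `(x₀, y₀) ∈ 𝒳` and `k ∈ ℕ₀`. -/
theorem unit_equation_char_p {F : Type*} [Field F] [Fintype F]
    (p : ℕ) [Fact p.Prime] [CharP F p]
    (Γ : Subgroup (RatFunc F)ˣ) (hΓfg : Group.FG Γ)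
    (r : ℕ) (hr : Module.finrank ℚ (ℚ ⊗[ℤ] (Additive Γ)) = r) :
    ∃ 𝒳 : Finset ((RatFunc F)ˣ × (RatFunc F)ˣ), 𝒳.card ≤ p ^ (2 * r) - 1 ∧
      ∀ x y : (RatFunc F)ˣ, x ∈ Γ → y ∈ Γ →
        (x : RatFunc F) + (y : RatFunc F) = 1 →
        ¬((x : RatFunc F) ∈ Set.range (algebraMap F (RatFunc F)) ∧
          (y : RatFunc F) ∈ Set.range (algebraMap F (RatFunc F))) →
        ∃ z ∈ 𝒳, ∃ k : ℕ, x = z.1 ^ p ^ k ∧ y = z.2 ^ p ^ k := by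
  have : CharP (RatFunc F) p := charP_of_injective_algebraMap (algebraMap F (RatFunc F)).injective p
  have : Module.Finite ℤ (Additive Γ) := Module.Finite.iff_addGroup_fg.2 (GroupFG.iff_add_fg.1 hΓfg)
  have hrank : Module.rank ℤ (Additive Γ) = r := hr ▸ rank_eq_finrank_tensorProduct ℚ
  obtain ⟨𝒳, hcard, h⟩ := unit_equation_char_p_general p Γ r hrank.le
  have hcore {x : RatFunc F} (hx : x ∈ perfectCore (RatFunc F) p) :
      x ∈ Set.range (algebraMap F (RatFunc F)) := perfectCore_ratFunc_le p hx
  exact ⟨𝒳, hcard, fun x y hx hy hxy hconst => h x y hx hy hxy (mt (And.imp hcore hcore) hconst)⟩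
end

section
/- Let U ∈ 𝒜 with U′ ≠ 0, let A ∈ 𝒜 \ {0}, and let M and N₁ be positive integers. Then there exists an integer n ≥ N₁ such that A − Uⁿ has an irreducible factor of degree at least M. -/
open Polynomial

/-!
If `(A - U ^ n) * W` divides `U ^ n * (U ^ r - 1)`, then subtracting `U ^ n * (U ^ r - 1)` from
`A - U ^ n` gives a factorization `A - U ^ (n + r) = (A - U ^ n) * (1 - W * C)`. Such an `r > 0`
exists when the powers of `U` modulo `(A - U ^ n) * W`, which are eventually periodic because the
quotient ring is finite, have preperiod at most `n`. For large `n` this follows from eventual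
periodicity modulo `A * W`, which does not depend on `n`. The factor `1 - W * C` is not constant,
because the degree of `A - U ^ n` increases with `n`, and its irreducible factors do not divide `W`.
If `W` is the product of all nonzero polynomials of degree less than `M`, they have degree at least
`M`.
-/

section CommRing

variable {R : Type*} [CommRing R]

theorem exists_dvd_pow_mul_pow_sub_one (S U : R) [Finite (R ⧸ Ideal.span {S})] :
    ∃ a r : ℕ, 0 < r ∧ S ∣ U ^ a * (U ^ r - 1) := by
  obtain ⟨a, b, hne, hab⟩ :=
    Finite.exists_ne_map_eq_of_infinite fun n : ℕ ↦ Ideal.Quotient.mk (Ideal.span {S}) (U ^ n)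
  wlog hlt : a < b generalizing a b
  · exact this b a hne.symm hab.symm (by lia)
  refine ⟨a, b - a, Nat.sub_pos_of_lt hlt, ?_⟩
  rw [mul_sub_one, ← pow_add, Nat.add_sub_cancel' hlt.le]
  exact Ideal.mem_span_singleton.mp (Ideal.Quotient.eq.mp hab.symm)

/- The hypothesis `hX` says that `U ^ n` is a multiple of `U ^ (n + 1)` modulo `S`, so the powers of
`U` modulo `S` have preperiod at most `n`. -/
theorem dvd_pow_mul_of_dvd_pow_mul_one_sub_mul {S U X Y : R} {n a : ℕ}
    (hX : S ∣ U ^ n * (1 - U * X)) (hY : S ∣ U ^ a * Y) : S ∣ U ^ n * Y := by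
  have hcop : IsCoprime (1 - U * X) (U ^ a) := IsCoprime.pow_right ⟨1, X, by ring⟩
  obtain ⟨x, y, hxy⟩ := hcop
  have hsplit : U ^ n * Y = U ^ n * (1 - U * X) * (x * Y) + U ^ a * Y * (y * U ^ n) := by
    linear_combination -(U ^ n * Y) * hxy
  rw [hsplit]
  exact dvd_add (hX.mul_right _) (hY.mul_right _)

theorem exists_sub_pow_mul_dvd_pow_mul_one_sub_mul {A U W : R} {a r n : ℕ} (hr : 0 < r)
    (hdvd : A * W ∣ U ^ a * (U ^ r - 1)) (han : a < n) :
    ∃ X, (A - U ^ n) * W ∣ U ^ n * (1 - U * X) := by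
  obtain ⟨C, hC⟩ := hdvd
  obtain ⟨s, rfl⟩ := Nat.exists_eq_add_of_lt hr
  obtain ⟨d, rfl⟩ := Nat.exists_eq_add_of_lt han
  refine ⟨U ^ s - W * C * U ^ d, -C * U ^ (d + 1), ?_⟩
  linear_combination -U ^ (d + 1) * hC

theorem exists_sub_pow_add_eq_mul_one_sub_mul [NoZeroDivisors R] [Ring.HasFiniteQuotients R]
    {A W : R} (U : R) (hA : A ≠ 0) (hW : W ≠ 0) :
    ∃ N : ℕ, ∀ n ≥ N, A - U ^ n ≠ 0 →
      ∃ r > 0, ∃ C, A - U ^ (n + r) = (A - U ^ n) * (1 - W * C) := by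
  have hfinite {S : R} (hS : S ≠ 0) : Finite (R ⧸ Ideal.span {S}) :=
    Ring.HasFiniteQuotients.finiteQuotient (by simpa using hS)
  have := hfinite (mul_ne_zero hA hW)
  obtain ⟨a, s, hs, hAW⟩ := exists_dvd_pow_mul_pow_sub_one (A * W) U
  refine ⟨a + 1, fun n hn hne ↦ ?_⟩
  obtain ⟨X, hX⟩ := exists_sub_pow_mul_dvd_pow_mul_one_sub_mul hs hAW hn
  have := hfinite (mul_ne_zero hne hW)
  obtain ⟨b, r, hr, hperiod⟩ := exists_dvd_pow_mul_pow_sub_one ((A - U ^ n) * W) U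
  obtain ⟨C, hC⟩ := dvd_pow_mul_of_dvd_pow_mul_one_sub_mul hX hperiod
  exact ⟨r, hr, C, by linear_combination -hC⟩

theorem exists_irreducible_dvd_sub_pow_not_dvd [IsDomain R] [Ring.HasFiniteQuotients R]
    {A U W : R} {N : ℕ} (hA : A ≠ 0) (hW : W ≠ 0) (hne : ∀ n ≥ N, A - U ^ n ≠ 0)
    (hassoc : ∀ n ≥ N, ∀ m > n, ¬ Associated (A - U ^ n) (A - U ^ m)) :
    ∃ n ≥ N, ∃ P, Irreducible P ∧ P ∣ A - U ^ n ∧ ¬ P ∣ W := by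
  obtain ⟨N', hN'⟩ := exists_sub_pow_add_eq_mul_one_sub_mul U hA hW
  let n := max N N'
  have hn : N ≤ n := le_max_left N N'
  obtain ⟨r, hr, C, hC⟩ := hN' n (le_max_right N N') (hne n hn)
  have hunit : ¬ IsUnit (1 - W * C) := fun h ↦
    hassoc n hn (n + r) (by lia) (hC ▸ associated_mul_unit_right _ _ h)
  have hzero : 1 - W * C ≠ 0 := right_ne_zero_of_mul (hC ▸ hne (n + r) (by lia))
  obtain ⟨P, hP, hPdvd⟩ := WfDvdMonoid.exists_irreducible_factor hunit hzero
  refine ⟨n + r, by lia, P, hP, hC ▸ hPdvd.mul_left _, fun hPW ↦ hP.not_dvd_one ?_⟩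
  exact (dvd_sub_left (hPW.mul_right C)).mp hPdvd

end CommRing

section Polynomial

theorem natDegree_sub_pow_eq_mul {R : Type*} [Ring R] [NoZeroDivisors R] {A U : R[X]} {n : ℕ}
    (h : A.natDegree < n * U.natDegree) :
    (A - U ^ n).natDegree = n * U.natDegree := by
  rw [← natDegree_pow] at h ⊢
  exact natDegree_sub_eq_right_of_natDegree_lt h

variable {F : Type*} [Field F]

instance hasFiniteQuotients_polynomial [Finite F] : Ring.HasFiniteQuotients F[X] where
  finiteQuotient {I} hI := by
    obtain ⟨f, rfl⟩ := (IsPrincipalIdealRing.principal I).principal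
    have hf : f ≠ 0 := by simpa using hI
    have : Module.Finite F (AdjoinRoot f) := (AdjoinRoot.powerBasis hf).finite
    exact Module.finite_of_finite F (M := AdjoinRoot f)

variable (F) in
theorem exists_ne_zero_forall_natDegree_lt_dvd [Finite F] (M : ℕ) :
    ∃ W : F[X], W ≠ 0 ∧ ∀ P : F[X], P ≠ 0 → P.natDegree < M → P ∣ W := by
  have : Finite (degreeLT F M) := .of_equiv _ (degreeLTEquiv F M).symm.toEquiv
  have hfin : {P : F[X] | P ≠ 0 ∧ P.natDegree < M}.Finite :=
    (Set.toFinite (degreeLT F M : Set F[X])).subset fun P hP ↦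
      mem_degreeLT.mpr ((natDegree_lt_iff_degree_lt hP.1).mp hP.2)
  refine ⟨∏ P ∈ hfin.toFinset, P, ?_, fun P hP hdeg ↦ ?_⟩
  · exact Finset.prod_ne_zero_iff.mpr fun P hP ↦ (hfin.mem_toFinset.mp hP).1
  · exact Finset.dvd_prod_of_mem id (hfin.mem_toFinset.mpr ⟨hP, hdeg⟩)

theorem exists_large_degree_irreducible_factor_general [Finite F] {U A : F[X]}
    (hU : 0 < U.natDegree) (hA : A ≠ 0) (M N₁ : ℕ) :
    ∃ n ≥ N₁, ∃ P : F[X], Irreducible P ∧ P ∣ A - U ^ n ∧ M ≤ P.natDegree := by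
  obtain ⟨W, hW, hdvdW⟩ := exists_ne_zero_forall_natDegree_lt_dvd F M
  let N := N₁ + A.natDegree + 1
  have hdeg (n : ℕ) (hn : n ≥ N) : (A - U ^ n).natDegree = n * U.natDegree :=
    natDegree_sub_pow_eq_mul (lt_of_lt_of_le (by lia) (Nat.le_mul_of_pos_right n hU))
  have hne (n : ℕ) (hn : n ≥ N) : A - U ^ n ≠ 0 :=
    ne_zero_of_natDegree_gt (n := 0) (hdeg n hn ▸ Nat.mul_pos (by lia) hU)
  have hassoc (n : ℕ) (hn : n ≥ N) (m : ℕ) (hm : m > n) :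
      ¬ Associated (A - U ^ n) (A - U ^ m) := fun h ↦ by
    have heq := natDegree_eq_of_degree_eq (degree_eq_degree_of_associated h)
    rw [hdeg n hn, hdeg m (by lia)] at heq
    exact hm.ne (Nat.eq_of_mul_eq_mul_right hU heq)
  obtain ⟨n, hn, P, hP, hPdvd, hPW⟩ := exists_irreducible_dvd_sub_pow_not_dvd hA hW hne hassoc
  exact ⟨n, by lia, P, hP, hPdvd, not_lt.mp fun h ↦ hPW (hdvdW P hP.ne_zero h)⟩

end Polynomial

/-- Let `U ∈ 𝒜 = 𝔽[t]` with `U' ≠ 0`, let `A ∈ 𝒜 \ {0}`, and let `M, N₁` be positive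
integers. Then there is an integer `n ≥ N₁` such that `A - Uⁿ` has an irreducible factor
of degree at least `M`. -/
theorem exists_large_degree_irreducible_factor {F : Type*} [Field F] [Fintype F]
    (U : F[X]) (hU : Polynomial.derivative U ≠ 0)
    (A : F[X]) (hA : A ≠ 0)
    (M N₁ : ℕ) (hM : 0 < M) (hN₁ : 0 < N₁) :
    ∃ n : ℕ, N₁ ≤ n ∧ ∃ P : F[X], Irreducible P ∧ P ∣ (A - U ^ n) ∧ M ≤ P.natDegree :=
  exists_large_degree_irreducible_factor_general
    (Nat.pos_of_ne_zero fun h ↦ hU (derivative_of_natDegree_zero h)) hA M N₁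
end
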